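/- arXiv:1509.07983 — 2 statements merged into one kernel-verified Lean document; each statement's English description precedes it below -/
import Mathlib

section
/- Let γ_a, γ_b ∈ ℝ^m, set O := (γ_a + γ_b)/2 and Δ_{ab} := ‖γ_a − γ_b‖₂. Let x_{a,i} := γ_a + r_{a,i} and x_{b,j} := γ_b + r_{b,j} for i, j = 1,…,n with ‖r_{a,i}‖₂ ≤ 1 and ‖r_{b,j}‖₂ ≤ 1 for all i, j, and let c_a, c_b be the respective empirical centers. Suppose ε > 0 satisfies ‖c_a − γ_a‖₂ ≤ ε, ‖c_b − γ_b‖₂ ≤ ε, and |Σ_{j=1}^n ‖x_{b,j} − O‖₂² − Σ_{j=1}^n ‖x_{a,j} − O‖₂²| ≤ 2nε. Then Σ_{i=1}^n Σ_{j=1}^n ‖x_{a,i} − x_{b,j}‖₂² − Σ_{i=1}^n Σ_{j=1}^n ‖x_{a,i} − x_{a,j}‖₂² ≥ n²·Δ_{ab}² − (6 + 4Δ_{ab})·n²·ε. -/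
open scoped BigOperators

/-!
Translate the origin to `O`. Expanding the squares, the between-cluster minus the within-cluster
total becomes `n (∑ⱼ ‖x_{b,j} - O‖² - ∑ⱼ ‖x_{a,j} - O‖²) + 2n²⟪c_a - O, c_a - c_b⟫`, whose first
term is at least `-2n²ε`. Writing `d = γ_a - γ_b`, `u = c_a - γ_a` and `v = c_b - γ_b`, the inner
product is `⟪d / 2 + u, d + u - v⟫`. Besides `‖d‖² / 2` it consists of terms linear in `d`, small
by Cauchy-Schwarz, and of `‖u‖² - ⟪u, v⟫`, which is at least `-‖v‖² / 4` by completing the square;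
finally `‖v‖² ≤ ε` because `‖v‖ ≤ 1`.
-/

open Finset
open scoped RealInnerProductSpace

section EmpiricalMean

variable {ι E : Type*} [Fintype ι] [AddCommGroup E] [Module ℝ E]

/-- The empirical center (arithmetic mean) of a finite family of vectors, which is `0` for the
empty family. -/
noncomputable def empiricalMean (x : ι → E) : E :=
  (Fintype.card ι : ℝ)⁻¹ • ∑ i, x i

variable [Nonempty ι]

lemma card_smul_empiricalMean (x : ι → E) :
    (Fintype.card ι : ℝ) • empiricalMean x = ∑ i, x i :=
  smul_inv_smul₀ (Nat.cast_ne_zero.mpr Fintype.card_ne_zero) _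

lemma empiricalMean_sub_const (x : ι → E) (c : E) :
    empiricalMean (fun i => x i - c) = empiricalMean x - c := by
  have hcard : (Fintype.card ι : ℝ) ≠ 0 := Nat.cast_ne_zero.mpr Fintype.card_ne_zero
  rw [empiricalMean, empiricalMean, sum_sub_distrib, sum_const, card_univ, smul_sub,
    ← Nat.cast_smul_eq_nsmul ℝ, inv_smul_smul₀ hcard]

lemma empiricalMean_mem_of_convex {s : Set E} (hs : Convex ℝ s) {x : ι → E}
    (hx : ∀ i, x i ∈ s) : empiricalMean x ∈ s := by
  rw [empiricalMean, smul_sum]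
  exact hs.sum_mem (fun _ _ => by positivity) (by simp) fun i _ => hx i

end EmpiricalMean

section InnerProductSpace

variable {E : Type*} [NormedAddCommGroup E] [InnerProductSpace ℝ E]

lemma sum_sum_norm_sub_sq {ι κ : Type*} [Fintype ι] [Fintype κ] (x : ι → E) (y : κ → E) :
    ∑ i, ∑ j, ‖x i - y j‖ ^ 2 =
      Fintype.card κ * ∑ i, ‖x i‖ ^ 2 + Fintype.card ι * ∑ j, ‖y j‖ ^ 2 -
        2 * ⟪∑ i, x i, ∑ j, y j⟫ := by
  simp only [norm_sub_sq_real, sum_add_distrib, sum_sub_distrib, sum_const, card_univ,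
    nsmul_eq_mul, sum_inner, inner_sum, ← mul_sum]
  rw [sum_comm]
  ring

lemma sum_sum_norm_sub_sq_sub_sum_sum_norm_sub_sq {ι : Type*} [Fintype ι] [Nonempty ι]
    (x y : ι → E) (c : E) :
    ∑ i, ∑ j, ‖x i - y j‖ ^ 2 - ∑ i, ∑ j, ‖x i - x j‖ ^ 2 =
      Fintype.card ι * (∑ j, ‖y j - c‖ ^ 2 - ∑ j, ‖x j - c‖ ^ 2) +
        2 * (Fintype.card ι : ℝ) ^ 2 *
          ⟪empiricalMean x - c, empiricalMean x - empiricalMean y⟫ := by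
  have sum_sub (z : ι → E) :
      ∑ i, (z i - c) = (Fintype.card ι : ℝ) • (empiricalMean z - c) := by
    rw [← empiricalMean_sub_const, card_smul_empiricalMean]
  have expand (z : ι → E) :
      ∑ i, ∑ j, ‖x i - z j‖ ^ 2 =
        Fintype.card ι * ∑ i, ‖x i - c‖ ^ 2 + Fintype.card ι * ∑ j, ‖z j - c‖ ^ 2 -
          2 * (Fintype.card ι : ℝ) ^ 2 * ⟪empiricalMean x - c, empiricalMean z - c⟫ := by
    have h := sum_sum_norm_sub_sq (fun i => x i - c) (fun j => z j - c)
    simp only [sub_sub_sub_cancel_right, sum_sub, real_inner_smul_left,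
      real_inner_smul_right] at h
    rw [h]
    ring
  rw [expand y, expand x, ← sub_sub_sub_cancel_right (empiricalMean x) (empiricalMean y) c,
    inner_sub_right _ (empiricalMean x - c)]
  ring

lemma inner_sub_norm_sq_le (u v : E) : ⟪u, v⟫ - ‖u‖ ^ 2 ≤ ‖v‖ ^ 2 / 4 := by
  have h : 0 ≤ ‖(2 : ℝ) • u - v‖ ^ 2 := by positivity
  rw [norm_sub_sq_real, norm_smul, real_inner_smul_left, Real.norm_ofNat] at h
  linarith

lemma le_two_mul_inner_sub_midpoint (a b p q : E) :
    ‖a - b‖ ^ 2 - ‖a - b‖ * (3 * ‖p - a‖ + ‖q - b‖) - ‖q - b‖ ^ 2 / 2 ≤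
      2 * ⟪p - midpoint ℝ a b, p - q⟫ := by
  set d := a - b with hd
  set u := p - a with hu
  set v := q - b with hv
  have hp : p - midpoint ℝ a b = (2⁻¹ : ℝ) • d + u := by
    rw [midpoint_eq_smul_add, invOf_eq_inv, hd, hu]
    module
  have hpq : p - q = d + u - v := by rw [hd, hu, hv]; abel
  have expand : 2 * ⟪p - midpoint ℝ a b, p - q⟫ =
      ‖d‖ ^ 2 + 3 * ⟪d, u⟫ - ⟪d, v⟫ - 2 * (⟪u, v⟫ - ‖u‖ ^ 2) := by
    rw [hp, hpq]
    simp only [inner_add_left, inner_add_right, inner_sub_right, real_inner_smul_left,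
      real_inner_self_eq_norm_sq, real_inner_comm d u]
    ring
  have hdu : -(‖d‖ * ‖u‖) ≤ ⟪d, u⟫ := neg_le_of_abs_le (abs_real_inner_le_norm d u)
  have hdv : ⟪d, v⟫ ≤ ‖d‖ * ‖v‖ := real_inner_le_norm d v
  have huv := inner_sub_norm_sq_le u v
  linarith

theorem difference_of_average_distances_general {ι : Type*} [Fintype ι] [Nonempty ι]
    {a b : E} {x y : ι → E} {R ε : ℝ} (hy : ∀ j, ‖y j - b‖ ≤ R)
    (hcenter_x : ‖empiricalMean x - a‖ ≤ ε) (hcenter_y : ‖empiricalMean y - b‖ ≤ ε)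
    (hmid : ∑ j, ‖x j - midpoint ℝ a b‖ ^ 2 - ∑ j, ‖y j - midpoint ℝ a b‖ ^ 2 ≤
      2 * Fintype.card ι * ε) :
    (Fintype.card ι : ℝ) ^ 2 * ‖a - b‖ ^ 2 -
        (2 + R / 2 + 4 * ‖a - b‖) * (Fintype.card ι : ℝ) ^ 2 * ε ≤
      ∑ i, ∑ j, ‖x i - y j‖ ^ 2 - ∑ i, ∑ j, ‖x i - x j‖ ^ 2 := by
  set N : ℝ := (Fintype.card ι : ℝ)
  set O := midpoint ℝ a b
  set p := empiricalMean x
  set q := empiricalMean y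
  have hqR : ‖q - b‖ ≤ R := mem_closedBall_iff_norm.mp <|
    empiricalMean_mem_of_convex (convex_closedBall b R) fun j => mem_closedBall_iff_norm.mpr (hy j)
  have hq_sq : ‖q - b‖ ^ 2 ≤ R * ε := by
    rw [sq]
    exact mul_le_mul hqR hcenter_y (norm_nonneg _) ((norm_nonneg _).trans hqR)
  have hlinear : ‖a - b‖ * (3 * ‖p - a‖ + ‖q - b‖) ≤ ‖a - b‖ * (4 * ε) := by
    gcongr
    linarith
  have hinner : ‖a - b‖ ^ 2 - 4 * ‖a - b‖ * ε - R * ε / 2 ≤ 2 * ⟪p - O, p - q⟫ := by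
    linarith [le_two_mul_inner_sub_midpoint a b p q]
  calc N ^ 2 * ‖a - b‖ ^ 2 - (2 + R / 2 + 4 * ‖a - b‖) * N ^ 2 * ε
      = N * -(2 * N * ε) + N ^ 2 * (‖a - b‖ ^ 2 - 4 * ‖a - b‖ * ε - R * ε / 2) := by ring
    _ ≤ N * (∑ j, ‖y j - O‖ ^ 2 - ∑ j, ‖x j - O‖ ^ 2) + N ^ 2 * (2 * ⟪p - O, p - q⟫) := by
      gcongr
      linarith
    _ = ∑ i, ∑ j, ‖x i - y j‖ ^ 2 - ∑ i, ∑ j, ‖x i - x j‖ ^ 2 := by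
      rw [sum_sum_norm_sub_sq_sub_sum_sum_norm_sub_sq x y O]
      ring

end InnerProductSpace

/-- Lower bound on the difference of total between-cluster and
within-cluster squared distances:
`ΣᵢΣⱼ‖x_{a,i} − x_{b,j}‖² − ΣᵢΣⱼ‖x_{a,i} − x_{a,j}‖² ≥ n²Δ_{ab}² − (6 + 4Δ_{ab})n²ε`. -/
theorem difference_of_average_distances
    (m n : ℕ) (hn : 0 < n)
    (γa γb : EuclideanSpace ℝ (Fin m))
    (O : EuclideanSpace ℝ (Fin m)) (hO : O = (2 : ℝ)⁻¹ • (γa + γb))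
    (Δab : ℝ) (hΔab : Δab = ‖γa - γb‖)
    (ra rb : Fin n → EuclideanSpace ℝ (Fin m))
    (hra : ∀ i, ‖ra i‖ ≤ 1) (hrb : ∀ j, ‖rb j‖ ≤ 1)
    (xa xb : Fin n → EuclideanSpace ℝ (Fin m))
    (hxa : ∀ i, xa i = γa + ra i) (hxb : ∀ j, xb j = γb + rb j)
    (ca cb : EuclideanSpace ℝ (Fin m))
    (hca : ca = (n : ℝ)⁻¹ • ∑ i, xa i) (hcb : cb = (n : ℝ)⁻¹ • ∑ j, xb j)
    (ε : ℝ) (hε : 0 < ε)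
    (hcenter_a : ‖ca - γa‖ ≤ ε) (hcenter_b : ‖cb - γb‖ ≤ ε)
    (hmid : |(∑ j, ‖xb j - O‖ ^ 2) - ∑ j, ‖xa j - O‖ ^ 2| ≤ 2 * n * ε) :
    (n : ℝ) ^ 2 * Δab ^ 2 - (6 + 4 * Δab) * n ^ 2 * ε
      ≤ (∑ i, ∑ j, ‖xa i - xb j‖ ^ 2) - ∑ i, ∑ j, ‖xa i - xa j‖ ^ 2 := by
  have := Fin.pos_iff_nonempty.mp hn
  rw [← invOf_eq_inv, ← midpoint_eq_smul_add] at hO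
  subst hO hΔab
  have h := difference_of_average_distances_general (a := γa) (b := γb) (x := xa) (y := xb)
    (R := 1) (ε := ε)
    (fun j => by simpa [hxb] using hrb j) (by simpa [empiricalMean, hca] using hcenter_a)
    (by simpa [empiricalMean, hcb] using hcenter_b)
    (by simpa using (abs_sub_le_iff.mp hmid).2)
  rw [Fintype.card_fin] at h
  refine le_trans ?_ h
  gcongr
  norm_num
end

section
/- Let Δ > 2, let N be a positive integer divisible by 4, and consider the multiset of N points on the real line consisting of N/4 copies of each of −Δ/2 − 1, −Δ/2 + 1, Δ/2 − 1, Δ/2 + 1. Let the planted partition assign the points at −Δ/2 ± 1 to one cluster and the points at Δ/2 ± 1 to the other, and let the alternative partition assign the N/4 points at −Δ/2 − 1 to one cluster and the remaining 3N/4 points to the other. Then the 2-means objective of the alternative partition is strictly smaller than that of the planted partition if and only if Δ < 1 + √3. (In particular, for 2 < Δ < 1 + √3, minimizing the 2-means objective does not recover the planted clusters, disproving the conjecture that center separation Δ > 2 suffices.) -/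
open scoped BigOperators

namespace Stmt17

variable {I : Type*} [Fintype I] [DecidableEq I]

/-- Mean of the points of `x` indexed by the finset `S`. -/
noncomputable def clusterMean (x : I → ℝ) (S : Finset I) : ℝ :=
  ((S.card : ℝ))⁻¹ * ∑ i ∈ S, x i

/-- The 2-means objective of the partition `(S, Sᶜ)` of the points `x`. -/
noncomputable def twoMeansObj (x : I → ℝ) (S : Finset I) : ℝ :=
  (∑ i ∈ S, (x i - clusterMean x S) ^ 2) + ∑ i ∈ Sᶜ, (x i - clusterMean x Sᶜ) ^ 2

end Stmt17

open Stmt17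

/-!
A cluster `S` has within-cluster scatter `∑ x² - (∑ x)² / |S|`. The total `∑ x²` is the same for all
partitions, so minimizing the 2-means objective means maximizing the between-cluster scatter, which
for centred data is `(∑_S x)² (1/|S| + 1/|Sᶜ|)`. Repeating every point `M` times multiplies the
objective by `M`, which leaves four points: there the planted partition has between-cluster scatter
`Δ²`, the alternative one `(Δ + 2)² / 3`, and `3 Δ² < (Δ + 2)²` amounts to `(Δ - 1)² < 3`.
-/

namespace Stmt17

variable {I J : Type*}

lemma sum_sub_clusterMean_sq (x : I → ℝ) (S : Finset I) :
    ∑ i ∈ S, (x i - clusterMean x S) ^ 2 = ∑ i ∈ S, x i ^ 2 - (∑ i ∈ S, x i) ^ 2 / S.card := by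
  obtain rfl | hS := S.eq_empty_or_nonempty
  · simp
  have hcard : (S.card : ℝ) ≠ 0 := by exact_mod_cast hS.card_ne_zero
  simp only [clusterMean, sub_sq, Finset.sum_add_distrib, Finset.sum_sub_distrib, ← Finset.sum_mul,
    ← Finset.mul_sum, Finset.sum_const, nsmul_eq_mul]
  field_simp
  ring

variable [Fintype I] [DecidableEq I]

lemma twoMeansObj_eq_sum_sq_sub (x : I → ℝ) (S : Finset I) :
    twoMeansObj x S = ∑ i, x i ^ 2 -
      ((∑ i ∈ S, x i) ^ 2 / S.card + (∑ i ∈ Sᶜ, x i) ^ 2 / Sᶜ.card) := by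
  rw [twoMeansObj, sum_sub_clusterMean_sq, sum_sub_clusterMean_sq,
    ← Finset.sum_add_sum_compl S fun i ↦ x i ^ 2]
  ring

lemma twoMeansObj_eq_sum_sq_sub_of_sum_eq_zero {x : I → ℝ} (hx : ∑ i, x i = 0) (S : Finset I) :
    twoMeansObj x S = ∑ i, x i ^ 2 -
      (∑ i ∈ S, x i) ^ 2 * ((S.card : ℝ)⁻¹ + (Sᶜ.card : ℝ)⁻¹) := by
  have hcompl : ∑ i ∈ Sᶜ, x i = -∑ i ∈ S, x i := by
    rw [eq_neg_iff_add_eq_zero, Finset.sum_compl_add_sum, hx]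
  rw [twoMeansObj_eq_sum_sq_sub, hcompl]
  ring

lemma twoMeansObj_comp_fst [Fintype J] [DecidableEq J] (y : I → ℝ) (S : Finset I) :
    twoMeansObj (fun p : I × J ↦ y p.1) (S ×ˢ Finset.univ) =
      Fintype.card J * twoMeansObj y S := by
  have hsum (T : Finset I) (f : I → ℝ) :
      ∑ p ∈ T ×ˢ (Finset.univ : Finset J), f p.1 = Fintype.card J * ∑ i ∈ T, f i := by
    simp [Finset.sum_product, Finset.mul_sum]
  have hscatter (T : Finset I) :
      (∑ p ∈ T ×ˢ (Finset.univ : Finset J), y p.1) ^ 2 / (T ×ˢ (Finset.univ : Finset J)).card =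
        Fintype.card J * ((∑ i ∈ T, y i) ^ 2 / T.card) := by
    rw [hsum, Finset.card_product, Finset.card_univ, Nat.cast_mul]
    field_simp
  have hcompl : (S ×ˢ (Finset.univ : Finset J))ᶜ = Sᶜ ×ˢ Finset.univ := by ext; simp
  rw [twoMeansObj_eq_sum_sq_sub, twoMeansObj_eq_sum_sq_sub, hcompl, hscatter, hscatter,
    ← Finset.univ_product_univ, hsum _ fun i ↦ y i ^ 2]
  ring

lemma twoMeansObj_singleton_lt_pair_iff (Δ : ℝ) :
    twoMeansObj ![-Δ / 2 - 1, -Δ / 2 + 1, Δ / 2 - 1, Δ / 2 + 1] {0} <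
      twoMeansObj ![-Δ / 2 - 1, -Δ / 2 + 1, Δ / 2 - 1, Δ / 2 + 1] {0, 1} ↔ |Δ - 1| < √3 := by
  set y : Fin 4 → ℝ := ![-Δ / 2 - 1, -Δ / 2 + 1, Δ / 2 - 1, Δ / 2 + 1]
  have hcentred : ∑ i, y i = 0 := by
    simp only [Fin.sum_univ_four, y, Matrix.cons_val]
    ring
  have hsingleton : twoMeansObj y {0} = ∑ i, y i ^ 2 - (Δ + 2) ^ 2 / 3 := by
    have hcard : ({0}ᶜ : Finset (Fin 4)).card = 3 := rfl
    rw [twoMeansObj_eq_sum_sq_sub_of_sum_eq_zero hcentred, hcard, Finset.sum_singleton,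
      Finset.card_singleton]
    simp only [y, Matrix.cons_val]
    ring
  have hpair : twoMeansObj y {0, 1} = ∑ i, y i ^ 2 - Δ ^ 2 := by
    have hcard : ({0, 1}ᶜ : Finset (Fin 4)).card = 2 := rfl
    rw [twoMeansObj_eq_sum_sq_sub_of_sum_eq_zero hcentred, hcard, Finset.sum_pair zero_ne_one,
      Finset.card_pair zero_ne_one]
    simp only [y, Matrix.cons_val]
    ring
  calc twoMeansObj y {0} < twoMeansObj y {0, 1}
      ↔ Δ ^ 2 < (Δ + 2) ^ 2 / 3 := by rw [hsingleton, hpair, sub_lt_sub_iff_left]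
    _ ↔ (Δ - 1) ^ 2 < 3 := by constructor <;> intro h <;> linarith
    _ ↔ |Δ - 1| < √3 := by rw [Real.lt_sqrt (abs_nonneg _), sq_abs]

end Stmt17

theorem planted_clusters_not_optimal_iff_general {J : Type*} [Fintype J] [DecidableEq J]
    [Nonempty J] (Δ : ℝ) (x : Fin 4 × J → ℝ)
    (hx : ∀ p, x p = ![-Δ / 2 - 1, -Δ / 2 + 1, Δ / 2 - 1, Δ / 2 + 1] p.1) :
    twoMeansObj x {p | p.1 = 0} < twoMeansObj x {p | (p.1 : ℕ) < 2} ↔ |Δ - 1| < √3 := by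
  have halt : ({p | p.1 = 0} : Finset (Fin 4 × J)) = {0} ×ˢ Finset.univ := by
    ext
    simp [-Finset.singleton_product]
  have hplanted : ({p | (p.1 : ℕ) < 2} : Finset (Fin 4 × J)) = {0, 1} ×ˢ Finset.univ := by
    ext ⟨a, j⟩
    fin_cases a <;> simp
  have hcopies : (0 : ℝ) < Fintype.card J := by exact_mod_cast Fintype.card_pos
  rw [funext hx, halt, hplanted, twoMeansObj_comp_fst, twoMeansObj_comp_fst,
    mul_lt_mul_iff_right₀ hcopies, twoMeansObj_singleton_lt_pair_iff]

/-- For `N = 4M` points on the line consisting of `M` copies of each of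
`−Δ/2 − 1, −Δ/2 + 1, Δ/2 − 1, Δ/2 + 1` (with `Δ > 2`), the alternative partition that
isolates the `M` leftmost points beats the planted partition (left ball vs.\ right ball)
in the 2-means objective if and only if `Δ < 1 + √3`. -/
theorem planted_clusters_not_optimal_iff
    (M : ℕ) (hM : 0 < M) (Δ : ℝ) (hΔ : 2 < Δ)
    (x : Fin 4 × Fin M → ℝ)
    (hx : ∀ p, x p = ![-Δ/2 - 1, -Δ/2 + 1, Δ/2 - 1, Δ/2 + 1] p.1)
    (planted : Finset (Fin 4 × Fin M))
    (hplanted : planted = Finset.univ.filter (fun p => (p.1 : ℕ) < 2))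
    (alt : Finset (Fin 4 × Fin M))
    (halt : alt = Finset.univ.filter (fun p => p.1 = 0)) :
    twoMeansObj x alt < twoMeansObj x planted ↔ Δ < 1 + Real.sqrt 3 := by
  have : Nonempty (Fin M) := Fin.pos_iff_nonempty.mp hM
  rw [halt, hplanted, planted_clusters_not_optimal_iff_general Δ x hx,
    abs_of_pos (by linarith), sub_lt_iff_lt_add']
end
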